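/- Let p be a prime, q = 1/p, let k ≥ 0 be an integer, and let x be a real number with |x| < 1. Then ∑_{μ=1}^∞ P(2k, p^μ)·x^μ = ((1−q^{2k+1}·x)/(1−q^{2k+1})) · ∑_{μ=1}^∞ P(2k+1, p^μ)·x^μ. -/

import Mathlib

/-- Number of symmetric `n × n` matrices over `ZMod m` with nonzero determinant. -/
noncomputable def Nsym (n m : ℕ) : ℕ :=
  Nat.card {A : Matrix (Fin n) (Fin n) (ZMod m) // A.IsSymm ∧ A.det ≠ 0}

/-- Proportion of symmetric `n × n` matrices over `ZMod m` with nonzero determinant. -/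
noncomputable def Psym (n m : ℕ) : ℝ :=
  (Nsym n m : ℝ) / (m : ℝ) ^ (n * (n + 1) / 2)

/-- The product of `1 - q ^ i` over the odd `i ≤ n`. -/
noncomputable def oddProd (q : ℝ) : ℕ → ℝ
  | 0 => 1
  | n + 1 => (if Even n then 1 - q ^ (n + 1) else 1) * oddProd q n

/-- For `q = 1 / p`, the proportion of symmetric `m × m` matrices over `ZMod p` of corank `r`. -/
noncomputable def corankProb (q : ℝ) : ℕ → ℕ → ℝ
  | m, 0 => oddProd q m
  | 0, _ + 1 => 0
  | m + 1, r + 1 => (1 - q ^ (m + 1)) * (q ^ (r + 1) / (1 - q ^ (r + 1))) * corankProb q m r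

theorem corankProb_zero_right (q : ℝ) (m : ℕ) : corankProb q m 0 = oddProd q m := by
  cases m <;> rfl

theorem corankProb_eq_zero_of_lt (q : ℝ) {m r : ℕ} (h : m < r) : corankProb q m r = 0 := by
  induction r generalizing m with
  | zero => omega
  | succ r ih =>
    cases m with
    | zero => rfl
    | succ m => rw [corankProb, ih (by omega), mul_zero]

theorem corankProb_self_le_one {q : ℝ} (h0 : 0 < q) (h1 : q < 1) (n : ℕ) :
    0 ≤ corankProb q n n ∧ corankProb q n n ≤ 1 := by
  induction n with
  | zero => simp [corankProb, oddProd]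
  | succ n ih =>
    have h : q ^ (n + 1) < 1 := pow_lt_one₀ h0.le h1 (by omega)
    have h' : 1 - q ^ (n + 1) ≠ 0 := by linarith
    have : corankProb q (n + 1) (n + 1) = q ^ (n + 1) * corankProb q n n := by
      rw [corankProb]; field_simp
    rw [this]
    have hq : 0 < q ^ (n + 1) := by positivity
    exact ⟨mul_nonneg hq.le ih.1, mul_le_one₀ h.le ih.1 ih.2⟩

/-- The recursion obtained by conditioning on the first column of a random symmetric matrix. -/
theorem corankProb_succ_zero (q : ℝ) (m : ℕ) :
    corankProb q (m + 1) 0 =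
      (1 - q) * corankProb q m 0 + q * (1 - q ^ m) * corankProb q (m - 1) 0 := by
  simp only [corankProb_zero_right]
  cases m with
  | zero => simp [oddProd]
  | succ m =>
    by_cases h : Even m
    · have : ¬ Even (m + 1) := by simpa [Nat.even_add_one] using h
      simp [oddProd, h, this]; ring
    · have : Even (m + 1) := by simpa [Nat.even_add_one] using h
      simp [oddProd, h, this]; ring

theorem corankProb_succ_succ {q : ℝ} (h0 : 0 < q) (h1 : q < 1) (m r : ℕ) :
    corankProb q (m + 1) (r + 1) =
      (1 - q) * corankProb q m (r + 1) + q * (1 - q ^ m) * corankProb q (m - 1) (r + 1) +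
        q ^ (m + 1) * corankProb q m r := by
  have hn (i : ℕ) : 1 - q ^ (i + 1) ≠ 0 := by
    have : q ^ (i + 1) < 1 := pow_lt_one₀ h0.le h1 (by omega)
    linarith
  induction r generalizing m with
  | zero =>
    cases m with
    | zero => have := hn 0; simp [corankProb, oddProd] at *; field_simp
    | succ m =>
      have h := corankProb_succ_zero q m
      have := hn 0
      cases m with
      | zero => simp [corankProb, oddProd] at *; field_simp; ring
      | succ m =>
        simp only [corankProb, Nat.add_sub_cancel] at *
        rw [h]
        simp only [zero_add, pow_one] at *
        field_simp
        ring
  | succ r ih =>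
    cases m with
    | zero =>
      have := hn 0; have := hn r; have := hn (r + 1)
      cases r <;> simp [corankProb]
    | succ m =>
      have h := ih m
      have := hn (r + 1)
      have := hn r
      cases m with
      | zero =>
        simp [corankProb] at *
        cases r <;> simp [corankProb, oddProd] at *
        field_simp
        exact Or.inl trivial
      | succ m =>
        rw [corankProb]
        have e1 : corankProb q (m + 1 + 1) (r + 1 + 1) = (1 - q ^ (m + 1 + 1)) *
          (q ^ (r + 1 + 1) / (1 - q ^ (r + 1 + 1))) * corankProb q (m + 1) (r + 1) := rfl
        have e2 : corankProb q (m + 1) (r + 1 + 1) = (1 - q ^ (m + 1)) *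
          (q ^ (r + 1 + 1) / (1 - q ^ (r + 1 + 1))) * corankProb q m (r + 1) := rfl
        have e3 : (1 - q ^ (m + 1 + 1)) * corankProb q (m + 1) r =
          (1 - q ^ (r + 1)) / q ^ (r + 1) * corankProb q (m + 1 + 1) (r + 1) := by
          rw [show corankProb q (m + 1 + 1) (r + 1) = (1 - q ^ (m + 1 + 1)) *
            (q ^ (r + 1) / (1 - q ^ (r + 1))) * corankProb q (m + 1) r from rfl]
          field_simp
        simp only [Nat.add_sub_cancel] at *
        rw [e1, e2]
        have h' : (1 - q) * corankProb q (m + 1) (r + 1) +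
            q * (1 - q ^ (m + 1)) * corankProb q m (r + 1) =
            corankProb q (m + 1 + 1) (r + 1) - q ^ (m + 1 + 1) * corankProb q (m + 1) r := by
          rw [h]; ring
        calc _ = (q ^ (r + 1 + 1) / (1 - q ^ (r + 1 + 1))) * ((1 - q ^ (m + 2)) *
              corankProb q (m + 1 + 1) (r + 1) - q ^ (m + 2) *
              ((1 - q ^ (r + 1)) / q ^ (r + 1) * corankProb q (m + 1 + 1) (r + 1)) +
              q ^ (m + 3) * ((1 - q ^ (r + 2)) / q ^ (r + 2)) *
                corankProb q (m + 1 + 1) (r + 1)) := by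
              field_simp; ring
          _ = _ := by
              rw [← e3]
              have : (1 - q ^ (m + 2)) * corankProb q (m + 1 + 1) (r + 1) =
                (1 - q ^ (m + 2)) * ((1 - q) * corankProb q (m + 1) (r + 1) +
            q * (1 - q ^ (m + 1)) * corankProb q m (r + 1) +
              q ^ (m + 2) * corankProb q (m + 1) r) := by rw [h]
              rw [this]
              field_simp; ring

theorem corankProb_succ_left_of_even {q : ℝ} {m r : ℕ} (h : r ≤ m) (he : Even (m - r)) :
    corankProb q (m + 1) r = (1 - q ^ (m + 1)) * corankProb q m r := by
  induction r generalizing m with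
  | zero => simp_all [corankProb_zero_right, oddProd]
  | succ r ih =>
    cases m with
    | zero => omega
    | succ m =>
      simp only [Nat.add_sub_add_right] at he
      rw [corankProb, ih (by omega) he, corankProb]; ring

theorem corankProb_succ_left_of_odd {q : ℝ} {m r : ℕ} (h : r ≤ m) (he : Odd (m - r)) :
    corankProb q (m + 1) r * (1 - q ^ (m + 1 - r)) = (1 - q ^ (m + 1)) * corankProb q m r := by
  induction r generalizing m with
  | zero =>
    have : ¬ Even m := by simpa using he
    simp [corankProb_zero_right, oddProd, this]; ring
  | succ r ih =>
    cases m with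
    | zero => omega
    | succ m =>
      simp only [Nat.add_sub_add_right] at he ⊢
      have := ih (by omega) he
      rw [corankProb, corankProb]
      linear_combination (1 - q ^ (m + 1 + 1)) * (q ^ (r + 1) / (1 - q ^ (r + 1))) * this

theorem corankProb_two_mul_succ_left {q : ℝ} {a b : ℕ} (h : b ≤ a + 1) :
    corankProb q (2 * (a + 1)) (2 * b) * (1 - q ^ (2 * (a + 1 - b))) =
      (1 - q ^ (2 * a + 2)) * ((1 - q ^ (2 * a + 1)) * corankProb q (2 * a) (2 * b)) := by
  rcases Nat.lt_or_ge a b with hb | hb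
  · obtain rfl : b = a + 1 := by omega
    rw [corankProb_eq_zero_of_lt q (show 2 * a < 2 * (a + 1) by omega)]
    simp
  · have h1 := corankProb_succ_left_of_even (q := q) (m := 2 * a) (r := 2 * b) (by omega)
      ⟨a - b, by omega⟩
    have h2 := corankProb_succ_left_of_odd (q := q) (m := 2 * a + 1) (r := 2 * b) (by omega)
      ⟨a - b, by omega⟩
    rw [← h1, ← h2, show 2 * (a + 1 - b) = 2 * a + 1 + 1 - 2 * b by omega]
    rfl

/-- The even-index factor of the closed form for the generating functions. -/
noncomputable def evenFactor (q y : ℝ) : ℕ → ℝ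
  | 0 => 1
  | k + 1 => (1 - q ^ (2 * k + 1)) / (1 - q ^ (2 * k + 3) * y) * evenFactor q y k

/-- A finite form of the Durfee square identity. -/
theorem sum_corankProb_evenFactor {q y : ℝ} (h0 : 0 < q) (h1 : q < 1) (hy : |y| ≤ 1) (a N : ℕ)
    (hN : a < N) :
    ∑ b ∈ Finset.range N, corankProb q (2 * a) (2 * b) * (y ^ b * evenFactor q y b) =
      evenFactor q y a := by
  have hn (i : ℕ) : 1 - q ^ (i + 1) ≠ 0 := by
    have : q ^ (i + 1) < 1 := pow_lt_one₀ h0.le h1 (by omega)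
    linarith
  have hny (i : ℕ) : 1 - q ^ (i + 1) * y ≠ 0 := by
    have : q ^ (i + 1) < 1 := pow_lt_one₀ h0.le h1 (by omega)
    have h3 : 0 < q ^ (i + 1) := by positivity
    have := (abs_le.1 hy).2
    nlinarith
  induction a generalizing N with
  | zero =>
    rw [Finset.sum_eq_single 0]
    · simp [corankProb, oddProd]
    · intro b _ hb
      rw [corankProb_eq_zero_of_lt q (by omega), zero_mul]
    · intro h; simp at h; omega
  | succ a ih =>
    have ih := ih N (by omega)
    set A := q ^ (2 * a + 2) with hA
    set u : ℕ → ℝ := fun b => corankProb q (2 * (a + 1)) (2 * b) * (y ^ b * evenFactor q y b)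
      with hu
    set c : ℕ → ℝ := fun b => u b * ((q ^ (2 * b))⁻¹ - 1 - q * y * (1 - q ^ (2 * b))) with hc
    have huz (b : ℕ) (hb : a + 1 < b) : u b = 0 := by
      simp only [hu]; rw [corankProb_eq_zero_of_lt q (by omega), zero_mul]
    have key (b : ℕ) : c (b + 1) = q * y * (q ^ (2 * b) - A) * u b := by
      rcases Nat.lt_or_ge (a + 1) b with hb | hb
      · simp only [hc]; rw [huz b hb, huz (b + 1) (by omega)]; ring
      · have e1 := corankProb_two_mul_succ_left (q := q) hb
        have e2 : corankProb q (2 * (a + 1)) (2 * (b + 1)) =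
            (1 - q ^ (2 * a + 2)) * (q ^ (2 * b + 2) / (1 - q ^ (2 * b + 2))) *
            ((1 - q ^ (2 * a + 1)) * (q ^ (2 * b + 1) / (1 - q ^ (2 * b + 1))) *
              corankProb q (2 * a) (2 * b)) := rfl
        have e3 : corankProb q (2 * (a + 1)) (2 * (b + 1)) =
            (q ^ (2 * b + 2) / (1 - q ^ (2 * b + 2))) * (q ^ (2 * b + 1) / (1 - q ^ (2 * b + 1))) *
            (corankProb q (2 * (a + 1)) (2 * b) * (1 - q ^ (2 * (a + 1 - b)))) := by
          rw [e2, e1]; ring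
        have e4 : q ^ (2 * (a + 1 - b)) = A / q ^ (2 * b) := by
          rw [hA, eq_div_iff (by positivity), ← pow_add]; congr 1; omega
        rw [e4] at e3
        simp only [hc, hu]
        rw [e3, evenFactor]
        have n1 := hn (2 * b); have n2 := hn (2 * b + 1)
        have n3 := hny (2 * b + 2)
        have n4 : q ^ (2 * b) ≠ 0 := by positivity
        rw [show 2 * b + 2 + 1 = 2 * b + 3 from rfl] at n3
        rw [show 2 * b + 1 + 1 = 2 * b + 2 from rfl] at n2
        have hq : q ≠ 0 := h0.ne'
        have p1 : q ^ (2 * b + 1) = q ^ (2 * b) * q := pow_succ _ _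
        have p2 : q ^ (2 * b + 2) = q ^ (2 * b) * q ^ 2 := pow_add _ _ _
        have p3 : q ^ (2 * b + 3) = q ^ (2 * b) * q ^ 3 := pow_add _ _ _
        rw [show 2 * (b + 1) = 2 * b + 2 by ring]
        rw [p1] at n1
        rw [p2] at n2
        rw [p3] at n3
        rw [p1, p2, p3]
        generalize q ^ (2 * b) = B at *
        field_simp
        ring
    have tele : ∑ b ∈ Finset.range N, (c b - c (b + 1)) = 0 := by
      rw [Finset.sum_range_sub']
      simp [hc, huz N hN]
    have main : (1 - A) * (1 - q * A * y) * ∑ b ∈ Finset.range N, u b =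
        (1 - A) * ((1 - q ^ (2 * a + 1)) * evenFactor q y a) := by
      rw [← ih, ← sub_eq_zero]
      rw [← mul_zero A, ← tele, Finset.mul_sum, Finset.mul_sum, Finset.mul_sum, Finset.mul_sum,
        ← Finset.sum_sub_distrib]
      refine Finset.sum_congr rfl fun b _ => ?_
      rw [key]
      rcases Nat.lt_or_ge (a + 1) b with hb | hb
      · simp only [hc, huz b hb, corankProb_eq_zero_of_lt q (show 2 * a < 2 * b by omega)]; ring
      · have e1 := corankProb_two_mul_succ_left (q := q) hb
        have e4 : q ^ (2 * (a + 1 - b)) = A / q ^ (2 * b) := by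
          rw [hA, eq_div_iff (by positivity), ← pow_add]; congr 1; omega
        rw [e4, ← hA] at e1
        simp only [hc, hu]
        have n4 : q ^ (2 * b) ≠ 0 := by positivity
        have : (1 - A) * ((1 - q ^ (2 * a + 1)) *
          (corankProb q (2 * a) (2 * b) * (y ^ b * evenFactor q y b))) =
          corankProb q (2 * (a + 1)) (2 * b) * (1 - A / q ^ (2 * b)) *
            (y ^ b * evenFactor q y b) := by rw [e1]; ring
        rw [this]
        field_simp
        ring
    have nA : 1 - A ≠ 0 := hn (2 * a + 1)
    have nA' : 1 - q * A * y ≠ 0 := by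
      have := hny (2 * a + 2)
      rwa [show 2 * a + 2 + 1 = (2 * a + 2) + 1 from rfl, pow_succ', ← hA] at this
    rw [mul_assoc] at main
    have main := mul_left_cancel₀ nA main
    rw [evenFactor, show q ^ (2 * a + 3) = q * A by rw [hA]; ring]
    rw [div_mul_eq_mul_div, eq_div_iff nA', ← main]
    ring

/-- The closed form, up to a common factor, of the generating functions. -/
noncomputable def closedForm (q x : ℝ) (n : ℕ) : ℝ :=
  evenFactor q (x ^ 2) (n / 2) * (if Even n then 1 - q ^ (n + 1) * x else 1 - q ^ n)

theorem closedForm_two_mul (q x : ℝ) (k : ℕ) :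
    closedForm q x (2 * k) = evenFactor q (x ^ 2) k * (1 - q ^ (2 * k + 1) * x) := by
  simp [closedForm]

theorem closedForm_two_mul_add_one (q x : ℝ) (k : ℕ) :
    closedForm q x (2 * k + 1) = evenFactor q (x ^ 2) k * (1 - q ^ (2 * k + 1)) := by
  simp [closedForm, show (2 * k + 1) / 2 = k by omega]

theorem sum_range_two_mul (f : ℕ → ℝ) (N : ℕ) :
    ∑ r ∈ Finset.range (2 * N), f r = ∑ b ∈ Finset.range N, (f (2 * b) + f (2 * b + 1)) := by
  induction N with
  | zero => simp
  | succ N ih =>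
    rw [show 2 * (N + 1) = 2 * N + 1 + 1 by ring, Finset.sum_range_succ, Finset.sum_range_succ,
      Finset.sum_range_succ, ih]
    ring

theorem sum_range_corankProb_mul {m M : ℕ} (q : ℝ) (w : ℕ → ℝ) (h : m + 1 ≤ M) :
    ∑ r ∈ Finset.range (m + 1), corankProb q m r * w r =
      ∑ r ∈ Finset.range M, corankProb q m r * w r := by
  refine Finset.sum_subset (by simpa using h) fun r _ hr => ?_
  rw [corankProb_eq_zero_of_lt q (by simpa using hr), zero_mul]

theorem closedForm_eq_sum {q x : ℝ} (h0 : 0 < q) (h1 : q < 1) (hx : |x| < 1) (m : ℕ) :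
    closedForm q x m =
      ∑ r ∈ Finset.range (m + 1), corankProb q m r * (x ^ r * closedForm q x r) := by
  have hn (i : ℕ) : 1 - q ^ (i + 1) ≠ 0 := by
    have : q ^ (i + 1) < 1 := pow_lt_one₀ h0.le h1 (by omega)
    linarith
  have hy : |x ^ 2| ≤ 1 := by rw [abs_pow]; exact pow_le_one₀ (abs_nonneg x) hx.le
  have hodd (m b : ℕ) : corankProb q (m + 1) (2 * b + 1) *
      (x ^ (2 * b + 1) * closedForm q x (2 * b + 1)) =
      (1 - q ^ (m + 1)) * q ^ (2 * b + 1) * x *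
        (corankProb q m (2 * b) * ((x ^ 2) ^ b * evenFactor q (x ^ 2) b)) := by
    have := hn (2 * b)
    rw [closedForm_two_mul_add_one, corankProb, ← pow_mul]
    field_simp
    ring
  obtain ⟨a, rfl | rfl⟩ := Nat.even_or_odd' m
  · rw [sum_range_corankProb_mul q _ (show 2 * a + 1 ≤ 2 * (a + 1) by omega), sum_range_two_mul,
      closedForm_two_mul, ← sum_corankProb_evenFactor h0 h1 hy a (a + 1) (by omega),
      Finset.sum_mul]
    refine Finset.sum_congr rfl fun b hb => ?_
    cases a with
    | zero =>
      obtain rfl : b = 0 := by simpa using hb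
      simp [corankProb, closedForm, mul_assoc]
    | succ a =>
      have hb : b ≤ a + 1 := by simp at hb; omega
      rw [show 2 * (a + 1) = (2 * a + 1) + 1 by ring, hodd, closedForm_two_mul]
      have e1 := corankProb_two_mul_succ_left (q := q) hb
      have e4 : q ^ (2 * (a + 1 - b)) = q ^ (2 * a + 2) / q ^ (2 * b) := by
        rw [eq_div_iff (by positivity), ← pow_add]; congr 1; omega
      have n4 : q ^ (2 * b) ≠ 0 := by positivity
      rw [e4] at e1
      have e5 : corankProb q (2 * (a + 1)) (2 * b) * (1 - q ^ (2 * a + 2) / q ^ (2 * b)) =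
          (1 - q ^ (2 * a + 2)) * corankProb q (2 * a + 1) (2 * b) := by
        rcases Nat.lt_or_ge a b with h | h
        · rw [e1, corankProb_eq_zero_of_lt q (show 2 * a < 2 * b by omega),
            corankProb_eq_zero_of_lt q (show 2 * a + 1 < 2 * b by omega)]; ring
        · rw [e1, corankProb_succ_left_of_even (show 2 * b ≤ 2 * a by omega) ⟨a - b, by omega⟩]
      field_simp at e5
      rw [show 2 * (a + 1) = (2 * a + 1) + 1 by ring] at e5
      rw [← pow_mul]
      rw [show q ^ (2 * b + 1) = q ^ (2 * b) * q from pow_succ _ _]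
      rw [show q ^ (2 * a + 1 + 1 + 1) = q ^ (2 * a + 2) * q from pow_succ _ _]
      rw [show q ^ (2 * a + 1 + 1) = q ^ (2 * a + 2) from rfl]
      linear_combination q * x * x ^ (2 * b) * evenFactor q (x ^ 2) b * e5
  · rw [sum_range_corankProb_mul q _ (show 2 * a + 1 + 1 ≤ 2 * (a + 1) by omega),
      sum_range_two_mul, closedForm_two_mul_add_one,
      ← sum_corankProb_evenFactor h0 h1 hy a (a + 1) (by omega), Finset.sum_mul]
    refine Finset.sum_congr rfl fun b hb => ?_
    have hb : b ≤ a := by simp at hb; omega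
    rw [hodd, closedForm_two_mul, corankProb_succ_left_of_even (show 2 * b ≤ 2 * a by omega)
      ⟨a - b, by omega⟩, ← pow_mul]
    ring

theorem eq_closedForm_of_eq_sum {q x : ℝ} (h0 : 0 < q) (h1 : q < 1) (hx : |x| < 1) (F : ℕ → ℝ)
    (hF : ∀ m, F m = ∑ r ∈ Finset.range (m + 1), corankProb q m r * (x ^ r * F r)) (m : ℕ) :
    F m = F 0 / (1 - q * x) * closedForm q x m := by
  have hqx : 1 - q * x ≠ 0 := by have := (abs_lt.1 hx).2; nlinarith
  induction m using Nat.strong_induction_on with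
  | _ m ih =>
    cases m with
    | zero => simp [closedForm, evenFactor, hqx]
    | succ m =>
      have hz := closedForm_eq_sum h0 h1 hx (m + 1)
      have hf := hF (m + 1)
      rw [Finset.sum_range_succ] at hz hf
      have hs : ∑ r ∈ Finset.range (m + 1), corankProb q (m + 1) r * (x ^ r * F r) =
          F 0 / (1 - q * x) *
          ∑ r ∈ Finset.range (m + 1), corankProb q (m + 1) r * (x ^ r * closedForm q x r) := by
        rw [Finset.mul_sum]
        refine Finset.sum_congr rfl fun r hr => ?_
        rw [ih r (by simpa using hr)]; ring
      have hc : 1 - corankProb q (m + 1) (m + 1) * x ^ (m + 1) ≠ 0 := by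
        have hp := corankProb_self_le_one h0 h1 (m + 1)
        have hx' : |x ^ (m + 1)| < 1 := by
          rw [abs_pow]; exact pow_lt_one₀ (abs_nonneg x) hx (by omega)
        have := abs_lt.1 hx'
        nlinarith
      apply mul_left_cancel₀ hc
      linear_combination hf - F 0 / (1 - q * x) * hz + hs

open Matrix

section Counting

variable {R : Type*} [CommRing R] (I : Ideal R) {ι κ α : Type*}

/-- Symmetric matrices whose rows (and columns) indexed by `J` have entries in the ideal `I`. -/
def symMat (J : ι → Prop) : AddSubgroup (Matrix ι ι R) where
  carrier := {S | S.IsSymm ∧ ∀ i k, J i → S i k ∈ I}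
  zero_mem' := ⟨isSymm_zero, fun _ _ _ => I.zero_mem⟩
  add_mem' ha hb := ⟨ha.1.add hb.1, fun i k h => I.add_mem (ha.2 i k h) (hb.2 i k h)⟩
  neg_mem' ha := ⟨ha.1.neg, fun i k h => I.neg_mem (ha.2 i k h)⟩

theorem mem_symMat {J : ι → Prop} {S : Matrix ι ι R} :
    S ∈ symMat I J ↔ S.IsSymm ∧ ∀ i k, J i → S i k ∈ I := Iff.rfl

/-- The number of matrices in `symMat I J` with nonzero determinant. -/
noncomputable def symCount [Fintype ι] [DecidableEq ι] (J : ι → Prop) : ℕ :=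
  Nat.card {S : Matrix ι ι R // S ∈ symMat I J ∧ S.det ≠ 0}

theorem reindex_mem_symMat (e : ι ≃ κ) {J : ι → Prop} {J' : κ → Prop}
    (h : ∀ i, J i ↔ J' (e i)) (S : Matrix ι ι R) :
    S ∈ symMat I J ↔ reindex e e S ∈ symMat I J' := by
  simp only [mem_symMat, reindex_apply, submatrix_apply]
  refine and_congr ⟨fun hS => hS.submatrix _, fun hS => ?_⟩
    ⟨fun hS i k hi => ?_, fun hS i k hi => ?_⟩
  · simpa using hS.submatrix e
  · exact hS _ _ ((h _).2 (by simpa using hi))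
  · simpa using hS (e i) (e k) ((h i).1 hi)

theorem card_symMat_congr (e : ι ≃ κ) {J : ι → Prop} {J' : κ → Prop}
    (h : ∀ i, J i ↔ J' (e i)) : Nat.card (symMat I J) = Nat.card (symMat I J') :=
  Nat.card_congr ((reindex e e).subtypeEquiv fun S => reindex_mem_symMat I e h S)

theorem symCount_congr [Fintype ι] [DecidableEq ι] [Fintype κ] [DecidableEq κ] (e : ι ≃ κ)
    {J : ι → Prop} {J' : κ → Prop} (h : ∀ i, J i ↔ J' (e i)) :
    symCount I J = symCount I J' :=
  Nat.card_congr ((reindex e e).subtypeEquiv fun S =>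
    and_congr (reindex_mem_symMat I e h S) (by rw [det_reindex_self]))

/-- Schur complements preserve the number of matrices with nonzero determinant. -/
theorem card_schur_complement [Fintype ι] [DecidableEq ι] [Fintype α] [DecidableEq α]
    {J : ι → Prop} (A : Matrix α α R) (hA : A.IsSymm) (hdet : IsUnit A.det) (C : Matrix α ι R)
    (hC : ∀ a i, J i → C a i ∈ I) :
    Nat.card {D : Matrix ι ι R // D ∈ symMat I J ∧ (fromBlocks A C Cᵀ D).det ≠ 0} =
      symCount I J := by
  have hmem : Cᵀ * A⁻¹ * C ∈ symMat I J := by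
    refine ⟨?_, fun i k hi => ?_⟩
    · have : (A⁻¹)ᵀ = A⁻¹ := by rw [transpose_nonsing_inv, hA.eq]
      simp [IsSymm, transpose_mul, this, Matrix.mul_assoc]
    · rw [Matrix.mul_assoc, mul_apply]
      exact I.sum_mem fun a _ => I.mul_mem_right _ (hC a i hi)
  let := invertibleOfIsUnitDet A hdet
  refine Nat.card_congr ((Equiv.subRight (Cᵀ * A⁻¹ * C)).subtypeEquiv fun D => ?_)
  refine and_congr ?_ ?_
  · exact ⟨fun h => sub_mem h hmem, fun h => by simpa using add_mem h hmem⟩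
  · rw [det_fromBlocks₁₁, invOf_eq_nonsing_inv, Equiv.subRight_apply, Ne, Ne,
      hdet.mul_right_eq_zero]

/-- The symmetric matrix with corner `b`, first row `c` and remaining block `D`. -/
abbrev bordered (b : R) (c : ι → R) (D : Matrix ι ι R) : Matrix (Unit ⊕ ι) (Unit ⊕ ι) R :=
  fromBlocks (of fun _ _ => b) (of fun _ => c) (of fun _ => c)ᵀ D

theorem bordered_mem_symMat {P : Prop} {J : ι → Prop} {b : R} {c : ι → R} {D : Matrix ι ι R} :
    bordered b c D ∈ symMat I (Sum.elim (fun _ => P) J) ↔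
      ((P → b ∈ I) ∧ ∀ i, P ∨ J i → c i ∈ I) ∧ D ∈ symMat I J := by
  simp only [mem_symMat, isSymm_fromBlocks_iff, Sum.forall, Sum.elim_inl, Sum.elim_inr,
    fromBlocks_apply₁₁, fromBlocks_apply₁₂, fromBlocks_apply₂₁, fromBlocks_apply₂₂, of_apply,
    transpose_apply, transpose_transpose]
  constructor
  · rintro ⟨⟨-, -, -, h1⟩, h2, h3⟩
    refine ⟨⟨(h2 ()).1 (), ?_⟩, h1, fun i => (h3 i).2⟩
    rintro i (h | h)
    · exact (h2 ()).2 i h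
    · exact (h3 i).1 () h
  · rintro ⟨⟨h1, h2⟩, h3, h4⟩
    exact ⟨⟨rfl, trivial, trivial, h3⟩, fun _ => ⟨fun _ => h1, fun i h => h2 i (.inl h)⟩,
      fun i => ⟨fun _ h => h2 i (.inr h), h4 i⟩⟩

open Classical in
theorem card_bordered [Fintype R] [Fintype ι] [DecidableEq ι] (P : Prop) (J : ι → Prop)
    (Q : Matrix (Unit ⊕ ι) (Unit ⊕ ι) R → Prop) :
    Nat.card {S // S ∈ symMat I (Sum.elim (fun _ => P) J) ∧ Q S} =
      ∑ b : R × (ι → R), if (P → b.1 ∈ I) ∧ ∀ i, P ∨ J i → b.2 i ∈ I then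
        Nat.card {D // D ∈ symMat I J ∧ Q (bordered b.1 b.2 D)} else 0 := by
  have h (b : R × (ι → R)) : (if (P → b.1 ∈ I) ∧ ∀ i, P ∨ J i → b.2 i ∈ I then
        Nat.card {D // D ∈ symMat I J ∧ Q (bordered b.1 b.2 D)} else 0) =
      Nat.card {D // bordered b.1 b.2 D ∈ symMat I (Sum.elim (fun _ => P) J) ∧
        Q (bordered b.1 b.2 D)} := by
    simp only [bordered_mem_symMat]
    split_ifs with hb
    · simp only [eq_true hb, true_and]
    · simp [hb]
  rw [Finset.sum_congr rfl fun b _ => h b, ← Nat.card_sigma]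
  refine Nat.card_congr
    { toFun := fun S => ⟨(S.1 (.inl ()) (.inl ()), fun i => S.1 (.inl ()) (.inr i)),
        S.1.toBlocks₂₂, ?_⟩
      invFun := fun x => ⟨bordered x.1.1 x.1.2 x.2.1, x.2.2⟩
      left_inv := fun S => ?_
      right_inv := fun x => rfl }
  · have : bordered (S.1 (.inl ()) (.inl ())) (fun i => S.1 (.inl ()) (.inr i))
        S.1.toBlocks₂₂ = S.1 := by
      ext (i | i) (k | k)
      · rfl
      · rfl
      · exact S.2.1.1.apply _ _
      · rfl
    rw [this]
    exact S.2
  · ext (i | i) (k | k)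
    · rfl
    · rfl
    · exact S.2.1.1.apply (.inr i) (.inl k)
    · rfl

/-- The number of vectors whose entries indexed by `J` lie in the ideal `I`. -/
noncomputable def vecCount (J : ι → Prop) : ℕ :=
  Nat.card {c : ι → R // ∀ i, J i → c i ∈ I}

open Classical in
theorem vecCount_eq [Fintype R] [Fintype ι] (J : ι → Prop) :
    vecCount I J = Nat.card I ^ Nat.card {i // J i} * Nat.card R ^ Nat.card {i // ¬ J i} := by
  rw [vecCount, Nat.card_congr (Equiv.subtypePiEquivPi (p := fun i (x : R) => J i → x ∈ I)),
    Nat.card_pi, ← Fintype.prod_subtype_mul_prod_subtype J]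
  have h1 (i : {i // J i}) : Nat.card {x : R // J i → x ∈ I} = Nat.card I := by
    simp only [eq_true i.2, true_imp_iff]
  have h2 (i : {i // ¬ J i}) : Nat.card {x : R // J i → x ∈ I} = Nat.card R := by
    simp only [eq_false i.2, false_imp_iff]
    exact Nat.card_congr (Equiv.subtypeUnivEquiv fun _ => trivial)
  simp only [h1, h2, Finset.prod_const, Finset.card_univ, Nat.card_eq_fintype_card]

/-- Pulling an index to the front. -/
noncomputable def frontEquiv [DecidableEq ι] (k : ι) : Unit ⊕ {i // ¬ i = k} ≃ ι :=
  (Equiv.sumCongr (Equiv.ofUnique Unit {i // i = k}) (Equiv.refl _)).trans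
    (Equiv.sumCompl (· = k))

@[simp]
theorem frontEquiv_inl [DecidableEq ι] (k : ι) (u : Unit) : frontEquiv k (.inl u) = k := by
  simp [frontEquiv]
  exact (default : {i // i = k}).2

@[simp]
theorem frontEquiv_inr [DecidableEq ι] (k : ι) (i : {i // ¬ i = k}) :
    frontEquiv k (.inr i) = i := by
  simp [frontEquiv]

@[simp]
theorem frontEquiv_symm_self [DecidableEq ι] (k : ι) : (frontEquiv k).symm k = .inl () := by
  rw [Equiv.symm_apply_eq, frontEquiv_inl]

@[simp]
theorem frontEquiv_symm_coe [DecidableEq ι] (k : ι) (i : {i // ¬ i = k}) :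
    (frontEquiv k).symm i = .inr i := by
  rw [Equiv.symm_apply_eq, frontEquiv_inr]

open Classical in
theorem sum_ite_border_const [Fintype R] [Fintype ι] (J : ι → Prop) (P : Prop) (n : ℕ) :
    (∑ b : R × (ι → R), if (P → b.1 ∈ I) ∧ ∀ i, P ∨ J i → b.2 i ∈ I then n else 0) =
      (if P then Nat.card I else Nat.card R) * vecCount I (fun i => P ∨ J i) * n := by
  rw [← Finset.sum_filter, Finset.sum_const, smul_eq_mul, ← Fintype.card_subtype,
    ← Nat.card_eq_fintype_card]
  congr 1
  rw [vecCount, Nat.card_congr (Equiv.subtypeProdEquivProd (p := fun b : R => P → b ∈ I)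
    (q := fun c : ι → R => ∀ i, P ∨ J i → c i ∈ I)), Nat.card_prod]
  congr 1
  split_ifs with hP
  · simp only [eq_true hP, true_imp_iff]
  · simp only [eq_false hP, false_imp_iff]
    exact Nat.card_congr (Equiv.subtypeUnivEquiv fun _ => trivial)

open Classical in
theorem card_symMat_bordered [Fintype R] [Fintype ι] (J : ι → Prop) (P : Prop) :
    Nat.card (symMat I (Sum.elim (fun _ : Unit => P) J)) =
      (if P then Nat.card I else Nat.card R) * vecCount I (fun i => P ∨ J i) *
        Nat.card (symMat I J) := by
  have h := card_bordered I P J (fun _ => True)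
  simp only [and_true] at h
  rw [← sum_ite_border_const]
  exact h

theorem card_bordered_of_isUnit_entry [Fintype R] [Fintype ι] [DecidableEq ι]
    (hI : ∀ a : R, a ∈ I ↔ ¬ IsUnit a)
    (J : ι → Prop) (b : R) (c : ι → R) (hc : ∀ i, J i → c i ∈ I) (hb : b ∈ I) (k : ι)
    (hk : c k ∉ I) :
    Nat.card {D // D ∈ symMat I J ∧ (bordered b c D).det ≠ 0} =
      Nat.card R * vecCount I (fun i : {i // ¬ i = k} => J i) *
        symCount I (fun i : {i // ¬ i = k} => J i) := by
  classical
  have hJk : ¬ J k := fun h => hk (hc k h)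
  set J' : {i // ¬ i = k} → Prop := fun i => J i
  let e := frontEquiv k
  have he (i : Unit ⊕ {i // ¬ i = k}) : Sum.elim (fun _ => False) J' i ↔ J (e i) := by
    rcases i with i | i <;> simp [e, J', hJk]
  rw [← Nat.card_congr ((reindex e e).subtypeEquiv
    (p := fun S => S ∈ symMat I (Sum.elim (fun _ => False) J') ∧
      (bordered b c (reindex e e S)).det ≠ 0)
    fun S => and_congr_left fun _ => reindex_mem_symMat I e he S),
    card_bordered I False J' (fun S => (bordered b c (reindex e e S)).det ≠ 0)]
  have hterm (x : R × ({i // ¬ i = k} → R)) (hx : ∀ i, J' i → x.2 i ∈ I) :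
      Nat.card {D // D ∈ symMat I J' ∧
        (bordered b c (reindex e e (bordered x.1 x.2 D))).det ≠ 0} = symCount I J' := by
    let A : Matrix (Unit ⊕ Unit) (Unit ⊕ Unit) R := bordered b (fun _ => c k) (of fun _ _ => x.1)
    let C : Matrix (Unit ⊕ Unit) {i // ¬ i = k} R :=
      of (Sum.elim (fun _ i => c i) (fun _ => x.2))
    let f : (Unit ⊕ Unit) ⊕ {i // ¬ i = k} ≃ Unit ⊕ ι :=
      (Equiv.sumAssoc _ _ _).trans (Equiv.sumCongr (Equiv.refl _) e)
    have hA : A.IsSymm := IsSymm.fromBlocks rfl rfl rfl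
    have hdet : IsUnit A.det := by
      let g : Fin 2 ≃ Unit ⊕ Unit := finTwoEquiv.trans Equiv.boolEquivPUnitSumPUnit
      have hA' : A.det = b * x.1 - c k * c k := by
        rw [← det_submatrix_equiv_self g, det_fin_two]
        rfl
      by_contra hu
      rw [← hI, hA', I.sub_mem_iff_right (I.mul_mem_right _ hb), hI] at hu
      rw [hI, not_not] at hk
      exact hu (hk.mul hk)
    have hC (a) (i) (hi : J' i) : C a i ∈ I := by
      rcases a with a | a
      · exact hc i hi
      · exact hx i hi
    rw [← card_schur_complement I A hA hdet C hC]
    refine Nat.card_congr (Equiv.subtypeEquivRight fun D => and_congr_right fun _ => ?_)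
    rw [← det_submatrix_equiv_self f]
    refine iff_of_eq (congrArg (fun M : Matrix _ _ R => M.det ≠ 0) ?_)
    ext ((i | i) | i) ((j | j) | j) <;> simp [f, A, C, e]
  have h := sum_ite_border_const I J' False (symCount I J')
  simp only [if_false, false_or] at h
  rw [← h]
  refine Finset.sum_congr (by ext; simp) fun x _ => ?_
  simp only [false_or]
  split_ifs with hx
  · exact hterm x hx.2
  · rfl

theorem card_bordered_of_isUnit [Fintype ι] [DecidableEq ι] (J : ι → Prop) (b : R) (c : ι → R)
    (hc : ∀ i, J i → c i ∈ I) (hb : IsUnit b) :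
    Nat.card {D // D ∈ symMat I J ∧ (bordered b c D).det ≠ 0} = symCount I J :=
  card_schur_complement I (of fun _ _ => b) rfl (by rwa [det_unique]) _ fun _ i => hc i

/-- Conditioning on the first column of a matrix in `symMat I J`. -/
theorem symCount_bordered [Fintype R] [Fintype ι] [DecidableEq ι]
    (hI : ∀ a : R, a ∈ I ↔ ¬ IsUnit a)
    (J : ι → Prop) (K : ℝ) (hK : ∀ k, ¬ J k →
      (Nat.card R * vecCount I (fun i : {i // ¬ i = k} => J i) *
        symCount I (fun i : {i // ¬ i = k} => J i) : ℝ) = K) :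
    (symCount I (Sum.elim (fun _ : Unit => False) J) : ℝ) =
      (Nat.card R - Nat.card I) * vecCount I J * symCount I J +
      Nat.card I * (vecCount I J - Nat.card I ^ Nat.card ι) * K +
      symCount I (Sum.elim (fun _ : Unit => True) J) := by
  classical
  set f : R → (ι → R) → ℝ := fun b c =>
    (Nat.card {D // D ∈ symMat I J ∧ (bordered b c D).det ≠ 0} : ℝ) with hf
  have hF : (symCount I (Sum.elim (fun _ : Unit => False) J) : ℝ) =
      ∑ b : R, ∑ c : ι → R, if ∀ i, J i → c i ∈ I then f b c else 0 := by
    rw [symCount, card_bordered, Fintype.sum_prod_type]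
    push_cast
    simp [hf]
  have hT : (symCount I (Sum.elim (fun _ : Unit => True) J) : ℝ) =
      ∑ b : R, ∑ c : ι → R, if b ∈ I ∧ ∀ i, c i ∈ I then f b c else 0 := by
    rw [symCount, card_bordered, Fintype.sum_prod_type]
    push_cast
    simp [hf]
  have hpt (b : R) (c : ι → R) : (if ∀ i, J i → c i ∈ I then f b c else 0) =
      ((1 - if b ∈ I then (1 : ℝ) else 0) * (if ∀ i, J i → c i ∈ I then 1 else 0)) *
        symCount I J + ((if b ∈ I then (1 : ℝ) else 0) * ((if ∀ i, J i → c i ∈ I then 1 else 0) -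
          if ∀ i, c i ∈ I then 1 else 0)) * K +
      (if b ∈ I ∧ ∀ i, c i ∈ I then f b c else 0) := by
    by_cases hc : ∀ i, J i → c i ∈ I
    · by_cases hb : b ∈ I
      · by_cases hc' : ∀ i, c i ∈ I
        · simp [hb, hc']
        · obtain ⟨k, hk⟩ := not_forall.1 hc'
          have h1 : f b c = K := by
            rw [← hK k fun h => hk (hc k h), hf]
            simp only
            rw [card_bordered_of_isUnit_entry I hI J b c hc hb k hk]
            push_cast
            rfl
          simp [hb, hc', h1, if_pos hc]
      · have h1 : f b c = symCount I J := by
          rw [hf]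
          simp only
          rw [card_bordered_of_isUnit I J b c hc (by simpa [hI] using hb)]
        simp [hb, h1, if_pos hc]
    · have hc' : ¬ ∀ i, c i ∈ I := fun h => hc fun i _ => h i
      simp only [if_neg hc, hc', and_false, if_false]
      ring
  have s1 : ∑ b : R, (if b ∈ I then (1 : ℝ) else 0) = Nat.card I := by
    rw [Finset.sum_boole, ← Fintype.card_subtype, Nat.card_eq_fintype_card]
  have s2 : ∑ c : ι → R, (if ∀ i, J i → c i ∈ I then (1 : ℝ) else 0) = vecCount I J := by
    rw [Finset.sum_boole, ← Fintype.card_subtype, vecCount, Nat.card_eq_fintype_card]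
  have s3 : ∑ c : ι → R, (if ∀ i, c i ∈ I then (1 : ℝ) else 0) =
      (Nat.card I : ℝ) ^ Nat.card ι := by
    have := vecCount_eq I (fun _ : ι => True)
    rw [Finset.sum_boole, ← Fintype.card_subtype, ← Nat.cast_pow, Nat.cast_inj]
    simpa [vecCount] using this
  have s4 : ∑ b : R, (1 : ℝ) = Nat.card R := by simp
  rw [hF, hT]
  simp only [hpt, Finset.sum_add_distrib, ← Finset.sum_mul, ← Finset.mul_sum,
    Finset.sum_sub_distrib, s1, s2, s3, s4]

/-- The proportion of matrices in `symMat I J` with nonzero determinant. -/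
noncomputable def symDens [Fintype ι] [DecidableEq ι] (J : ι → Prop) : ℝ :=
  symCount I J / Nat.card (symMat I J)

theorem card_symMat_ne_zero [Finite R] [Finite ι] (J : ι → Prop) :
    (Nat.card (symMat I J) : ℝ) ≠ 0 :=
  Nat.cast_ne_zero.2 Nat.card_pos.ne'

theorem symCount_eq_card_mul_symDens [Finite R] [Fintype ι] [DecidableEq ι] (J : ι → Prop) :
    (symCount I J : ℝ) = Nat.card (symMat I J) * symDens I J := by
  rw [symDens, mul_div_cancel₀ _ (card_symMat_ne_zero I J)]

theorem symDens_nonneg [Fintype ι] [DecidableEq ι] (J : ι → Prop) : 0 ≤ symDens I J := by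
  unfold symDens; positivity

theorem symDens_le_one [Finite R] [Fintype ι] [DecidableEq ι] (J : ι → Prop) :
    symDens I J ≤ 1 := by
  refine div_le_one_of_le₀ (Nat.cast_le.2 ?_) (Nat.cast_nonneg _)
  exact Nat.card_le_card_of_injective (fun S => (⟨S.1, S.2.1⟩ : symMat I J))
    fun S T h => Subtype.ext (congrArg (fun U : symMat I J => (U : Matrix ι ι R)) h)

/-- The proportion of matrices with nonzero determinant when the first `j` of `j + m` rows are
constrained to lie in the ideal `I`. -/
noncomputable def blockDens (j m : ℕ) : ℝ :=
  symDens I (Sum.elim (fun _ : Fin j => True) (fun _ : Fin m => False))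

theorem symDens_eq_blockDens [Fintype ι] [DecidableEq ι] (J : ι → Prop) {j m : ℕ}
    (hj : Nat.card {i // J i} = j) (hm : Nat.card {i // ¬ J i} = m) :
    symDens I J = blockDens I j m := by
  classical
  let e : ι ≃ Fin j ⊕ Fin m := (Equiv.sumCompl J).symm.trans
    (Equiv.sumCongr (Finite.equivFinOfCardEq hj) (Finite.equivFinOfCardEq hm))
  have he (i : ι) : J i ↔ Sum.elim (fun _ : Fin j => True) (fun _ : Fin m => False) (e i) := by
    by_cases h : J i
    · simp [e, h, Equiv.sumCompl_symm_apply_of_pos]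
    · simp [e, h, Equiv.sumCompl_symm_apply_of_neg]
  rw [blockDens, symDens, symDens, symCount_congr I e he, card_symMat_congr I e he]

theorem card_subtype_unit_sum [Finite ι] (Q : Unit ⊕ ι → Prop) :
    Nat.card {i // Q i} = Nat.card {u // Q (.inl u)} + Nat.card {i // Q (.inr i)} := by
  rw [Nat.card_congr (Equiv.subtypeSum (p := Q)), Nat.card_sum]

theorem blockDens_succ [Fintype R] (hI : ∀ a : R, a ∈ I ↔ ¬ IsUnit a) {q : ℝ}
    (hq : q * Nat.card R = Nat.card I) (j m : ℕ) :
    blockDens I j (m + 1) = (1 - q) * blockDens I j m + q * (1 - q ^ m) * blockDens I j (m - 1) +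
      q ^ (m + 1) * blockDens I (j + 1) m := by
  classical
  set J : Fin j ⊕ Fin m → Prop := Sum.elim (fun _ => True) (fun _ => False) with hJ
  have hj : Nat.card {i // J i} = j := by
    rw [Nat.card_congr (Equiv.subtypeSum (p := J)), Nat.card_sum]
    simp [J]
  have hm : Nat.card {i // ¬ J i} = m := by
    rw [Nat.card_congr (Equiv.subtypeSum (p := fun i => ¬ J i)), Nat.card_sum]
    simp [J]
  have hF : symDens I (Sum.elim (fun _ : Unit => False) J) = blockDens I j (m + 1) := by
    apply symDens_eq_blockDens
    · rw [card_subtype_unit_sum]; simp only [Sum.elim_inl, Sum.elim_inr, hj]; simp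
    · rw [card_subtype_unit_sum]; simp only [Sum.elim_inl, Sum.elim_inr, hm]; simp [add_comm]
  have hT : symDens I (Sum.elim (fun _ : Unit => True) J) = blockDens I (j + 1) m := by
    apply symDens_eq_blockDens
    · rw [card_subtype_unit_sum]; simp only [Sum.elim_inl, Sum.elim_inr, hj]; simp [add_comm]
    · rw [card_subtype_unit_sum]; simp only [Sum.elim_inl, Sum.elim_inr, hm]; simp
  have hK (k) (hk : ¬ J k) : (Nat.card R * vecCount I (fun i : {i // ¬ i = k} => J i) *
        symCount I (fun i : {i // ¬ i = k} => J i) : ℝ) =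
      Nat.card (symMat I J) * blockDens I j (m - 1) := by
    have he (i : Unit ⊕ {i // ¬ i = k}) :
        Sum.elim (fun _ => False) (fun i : {i // ¬ i = k} => J i) i ↔ J (frontEquiv k i) := by
      rcases i with i | i <;> simp [hk]
    have h1 := card_symMat_bordered I (fun i : {i // ¬ i = k} => J i) False
    rw [card_symMat_congr I (frontEquiv k) he] at h1
    have hj' := card_subtype_unit_sum
      (Sum.elim (fun _ : Unit => False) (fun i : {i // ¬ i = k} => J i))
    rw [Nat.card_congr ((frontEquiv k).subtypeEquiv he), hj] at hj'
    have hm' := card_subtype_unit_sum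
      fun i => ¬ (Sum.elim (fun _ : Unit => False) (fun i : {i // ¬ i = k} => J i)) i
    rw [Nat.card_congr ((frontEquiv k).subtypeEquiv (q := fun i => ¬ J i) fun i =>
      not_congr (he i)), hm] at hm'
    simp only [Sum.elim_inl, Sum.elim_inr] at hj' hm'
    have c0 : Nat.card {_u : Unit // False} = 0 := by simp
    have c1 : Nat.card {_u : Unit // ¬ False} = 1 := by simp
    rw [symCount_eq_card_mul_symDens, symDens_eq_blockDens I _ (j := j) (m := m - 1), h1]
    · simp only [if_false, false_or]
      push_cast
      ring
    · omega
    · omega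
  have key := symCount_bordered I hI J _ hK
  rw [symCount_eq_card_mul_symDens, symCount_eq_card_mul_symDens, symCount_eq_card_mul_symDens,
    card_symMat_bordered, card_symMat_bordered, hF, hT, vecCount_eq, vecCount_eq, vecCount_eq,
    symDens_eq_blockDens I J hj hm] at key
  have hS := card_symMat_ne_zero I J
  have hR : (Nat.card R : ℝ) ≠ 0 := Nat.cast_ne_zero.2 Nat.card_pos.ne'
  simp only [if_true, if_false, true_or, false_or, hj, hm, not_true_eq_false] at key
  have hI0 : (Nat.card I : ℝ) ≠ 0 := Nat.cast_ne_zero.2 Nat.card_pos.ne'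
  have hq0 : q ≠ 0 := by rintro rfl; simp at hq; exact hI0 (by simpa using hq.symm)
  have ht : Nat.card {_i : Fin j ⊕ Fin m // True} = j + m := by simp
  have hf : Nat.card {_i : Fin j ⊕ Fin m // False} = 0 := by simp
  have hc : Nat.card (Fin j ⊕ Fin m) = j + m := by simp
  rw [ht, hf, hc] at key
  push_cast at key
  rw [← hq] at key
  have hpos : (Nat.card R * ((q * Nat.card R) ^ j * Nat.card R ^ m) *
      Nat.card (symMat I J) : ℝ) ≠ 0 := by
    positivity
  apply mul_left_cancel₀ hpos
  rw [key]
  ring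

end Counting

section PrimePower

theorem card_subtype_comp_mul {G H : Type*} [AddGroup G] [AddGroup H] [Finite G] [Finite H]
    (φ : G →+ H) (hφ : Function.Surjective φ) (P : H → Prop) :
    Nat.card {g // P (φ g)} * Nat.card H = Nat.card {h // P h} * Nat.card G := by
  have key (P : H → Prop) :
      Nat.card {g // P (φ g)} = Nat.card {h // P h} * Nat.card φ.ker := by
    rw [← Nat.card_prod]
    refine Nat.card_congr
      { toFun := fun g => (⟨φ g, g.2⟩, ⟨g - Function.surjInv hφ (φ g), ?_⟩)
        invFun := fun x => ⟨x.2 + Function.surjInv hφ x.1, ?_⟩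
        left_inv := fun g => ?_
        right_inv := fun x => ?_ }
    · simp [AddMonoidHom.mem_ker, Function.surjInv_eq hφ]
    · have h : φ x.2 = 0 := x.2.2
      simpa [Function.surjInv_eq hφ, h] using x.1.2
    · simp
    · have h : φ x.2 = 0 := x.2.2
      ext <;> simp [Function.surjInv_eq hφ, h]
  have h := key fun _ => True
  simp only [Nat.card_congr (Equiv.subtypeUnivEquiv fun _ => trivial)] at h
  rw [key, h]
  ring

variable {p : ℕ}

/-- The maximal ideal of `ZMod (p ^ μ)`. -/
abbrev primeIdeal (p μ : ℕ) : Ideal (ZMod (p ^ μ)) := Ideal.span {(p : ZMod (p ^ μ))}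

theorem mem_primeIdeal_iff (hp : p.Prime) {μ : ℕ} (hμ : μ ≠ 0) (a : ZMod (p ^ μ)) :
    a ∈ primeIdeal p μ ↔ ¬ IsUnit a := by
  have : NeZero (p ^ μ) := ⟨(pow_pos hp.pos μ).ne'⟩
  obtain ⟨n, rfl⟩ := ZMod.natCast_zmod_surjective a
  rw [Ideal.mem_span_singleton, ZMod.isUnit_iff_coprime, Nat.coprime_pow_right_iff (by omega),
    Nat.coprime_comm, hp.coprime_iff_not_dvd, not_not]
  refine ⟨?_, fun h => Nat.cast_dvd_cast h⟩
  rintro ⟨c, hc⟩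
  obtain ⟨c, rfl⟩ := ZMod.natCast_zmod_surjective c
  rw [← Nat.cast_mul, ZMod.natCast_eq_natCast_iff] at hc
  exact (hc.dvd_iff (dvd_pow_self p hμ)).2 (dvd_mul_right _ _)

theorem card_primeIdeal_mul (hp : p.Prime) {μ : ℕ} (hμ : μ ≠ 0) :
    Nat.card (primeIdeal p μ) * p = Nat.card (ZMod (p ^ μ)) := by
  have : NeZero (p ^ μ) := ⟨(pow_pos hp.pos μ).ne'⟩
  have : NeZero p := ⟨hp.ne_zero⟩
  let φ := ZMod.castHom (dvd_pow_self p hμ) (ZMod p)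
  have h := card_subtype_comp_mul φ.toAddMonoidHom (ZMod.castHom_surjective (dvd_pow_self p hμ))
    (· = 0)
  simp only [Nat.card_zmod, Nat.card_unique, one_mul] at h
  refine Eq.trans ?_ (h.trans (Nat.card_zmod _).symm)
  congr 1
  refine Nat.card_congr (Equiv.subtypeEquivRight fun a => ?_)
  obtain ⟨n, rfl⟩ := ZMod.natCast_zmod_surjective a
  rw [mem_primeIdeal_iff hp hμ, ZMod.isUnit_iff_coprime, Nat.coprime_pow_right_iff (by omega),
    Nat.coprime_comm, hp.coprime_iff_not_dvd, not_not]
  change _ ↔ φ n = 0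
  rw [map_natCast, ZMod.natCast_eq_zero_iff]

theorem castHom_eq_zero_iff (hp : p.Prime) (ν j : ℕ) (a : ZMod (p ^ (ν + j))) :
    ZMod.castHom (pow_dvd_pow p (Nat.le_add_right ν j)) (ZMod (p ^ ν)) a = 0 ↔
      (p : ZMod (p ^ (ν + j))) ^ j * a = 0 := by
  have : NeZero (p ^ (ν + j)) := ⟨(pow_pos hp.pos _).ne'⟩
  obtain ⟨n, rfl⟩ := ZMod.natCast_zmod_surjective a
  rw [map_natCast, ZMod.natCast_eq_zero_iff, ← Nat.cast_pow, ← Nat.cast_mul,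
    ZMod.natCast_eq_zero_iff, pow_add, mul_comm, Nat.mul_dvd_mul_iff_left (pow_pos hp.pos j)]

/-- A symmetric matrix with entries in the range of `f` lifts to a symmetric matrix. -/
theorem exists_symm_map_eq {R S ι : Type*} (f : R → S) (M : Matrix ι ι S) (hM : M.IsSymm)
    (h : ∀ i k, ∃ a, f a = M i k) : ∃ A : Matrix ι ι R, A.IsSymm ∧ A.map f = M := by
  classical
  choose g hg using fun x : Set.range f => x.2
  refine ⟨Matrix.of fun i k => g ⟨M i k, h i k⟩, ?_, ?_⟩
  · ext i k
    simp [hM.apply]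
  · ext i k
    simp [hg]

theorem card_symMat_false {R : Type*} [CommRing R] [Fintype R] (I : Ideal R) (n : ℕ) :
    Nat.card (symMat I (fun _ : Fin n => False)) = Nat.card R ^ (n * (n + 1) / 2) := by
  induction n with
  | zero =>
    rw [Nat.card_eq_one_iff_unique.2 ⟨inferInstance, inferInstance⟩]; simp
  | succ n ih =>
    let e : Unit ⊕ Fin n ≃ Fin (n + 1) :=
      (Equiv.sumCongr (Equiv.ofUnique _ (Fin 1)) (Equiv.refl _)).trans
        (finSumFinEquiv.trans (finCongr (add_comm 1 n)))
    rw [← card_symMat_congr I e (J := Sum.elim (fun _ => False) (fun _ => False))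
      (by rintro (i | i) <;> simp), card_symMat_bordered, ih, vecCount_eq]
    simp only [if_false, false_or, not_false_eq_true]
    have h1 : Nat.card {_i : Fin n // False} = 0 := by simp
    have h2 : Nat.card {_i : Fin n // True} = n := by simp
    rw [h1, h2, pow_zero, one_mul, ← pow_succ', ← pow_add]
    congr 1
    rw [show (n + 1) * (n + 1 + 1) = n * (n + 1) + (n + 1) * 2 by ring,
      Nat.add_mul_div_right _ _ (by norm_num)]
    ring

theorem Psym_eq_symDens (n : ℕ) {m : ℕ} [NeZero m] (I : Ideal (ZMod m)) :
    Psym n m = symDens I (fun _ : Fin n => False) := by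
  rw [Psym, symDens, card_symMat_false, Nat.card_zmod, Nsym, symCount, Nat.cast_pow]
  simp [mem_symMat]

theorem Psym_eq_blockDens (n : ℕ) {m : ℕ} [NeZero m] (I : Ideal (ZMod m)) :
    Psym n m = blockDens I 0 n := by
  rw [Psym_eq_symDens n I]
  apply symDens_eq_blockDens <;> simp

theorem symDens_eq_of_surjective {R ι G : Type*} [CommRing R] [Finite R] [Fintype ι]
    [DecidableEq ι] {I : Ideal R} {J : ι → Prop} [AddGroup G] [Finite G] (φ : G →+ symMat I J)
    (hφ : Function.Surjective φ) :
    symDens I J = Nat.card {g // (φ g : Matrix ι ι R).det ≠ 0} / Nat.card G := by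
  have h := card_subtype_comp_mul φ hφ fun S => (S : Matrix ι ι R).det ≠ 0
  have hG : (Nat.card G : ℝ) ≠ 0 := Nat.cast_ne_zero.2 Nat.card_pos.ne'
  rw [symDens, div_eq_div_iff (card_symMat_ne_zero I J) hG]
  have hc : symCount I J = Nat.card {S : symMat I J // (S : Matrix ι ι R).det ≠ 0} :=
    Nat.card_congr (Equiv.subtypeSubtypeEquivSubtypeInter _ _).symm
  rw [hc]
  exact_mod_cast h.symm

theorem blockDens_zero_right (hp : p.Prime) (ν j : ℕ) :
    blockDens (primeIdeal p (ν + j)) j 0 = Psym j (p ^ ν) := by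
  have : NeZero (p ^ (ν + j)) := ⟨(pow_pos hp.pos _).ne'⟩
  have : NeZero (p ^ ν) := ⟨(pow_pos hp.pos _).ne'⟩
  set f := ZMod.castHom (pow_dvd_pow p (Nat.le_add_right ν j)) (ZMod (p ^ ν)) with hf
  have hfs : Function.Surjective f := ZMod.castHom_surjective _
  let φ : symMat (primeIdeal p (ν + j)) (fun _ : Fin j => False) →+
      symMat (primeIdeal p (ν + j)) (fun _ : Fin j => True) :=
    { toFun := fun A => ⟨(p : ZMod (p ^ (ν + j))) • A.1, A.2.1.smul _, fun i k _ =>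
        Ideal.mem_span_singleton.2 (dvd_mul_right _ _)⟩
      map_zero' := by ext; simp
      map_add' := fun A B => by ext; simp [mul_add] }
  have hφ : Function.Surjective φ := by
    rintro ⟨M, hM, hMI⟩
    obtain ⟨A, hA, hAM⟩ := exists_symm_map_eq (fun a => (p : ZMod (p ^ (ν + j))) * a) M hM
      fun i k => (Ideal.mem_span_singleton.1 (hMI i k trivial)).imp fun _ => Eq.symm
    exact ⟨⟨A, hA, fun _ _ h => h.elim⟩, Subtype.ext hAM⟩
  let ψ : symMat (primeIdeal p (ν + j)) (fun _ : Fin j => False) →+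
      symMat (⊥ : Ideal (ZMod (p ^ ν))) (fun _ : Fin j => False) :=
    { toFun := fun A => ⟨A.1.map f, A.2.1.map _, fun _ _ h => h.elim⟩
      map_zero' := by ext; simp
      map_add' := fun A B => by ext; simp }
  have hψ : Function.Surjective ψ := by
    rintro ⟨M, hM, hMI⟩
    obtain ⟨A, hA, hAM⟩ := exists_symm_map_eq f M hM fun i k => hfs _
    exact ⟨⟨A, hA, fun _ _ h => h.elim⟩, Subtype.ext hAM⟩
  rw [Psym_eq_symDens j ⊥, ← symDens_eq_blockDens _ (fun _ : Fin j => True) (by simp) (by simp),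
    symDens_eq_of_surjective φ hφ, symDens_eq_of_surjective ψ hψ]
  congr 2
  refine Nat.card_congr (Equiv.subtypeEquivRight fun A => not_congr ?_)
  change ((p : ZMod (p ^ (ν + j))) • A.1).det = 0 ↔ (A.1.map f).det = 0
  rw [det_smul, Fintype.card_fin, ← castHom_eq_zero_iff hp, ← RingHom.mapMatrix_apply,
    ← RingHom.map_det]

theorem blockDens_zero_right_eq_zero (p : ℕ) {μ j : ℕ} (h : μ ≤ j) :
    blockDens (primeIdeal p μ) j 0 = 0 := by
  rw [← symDens_eq_blockDens _ (fun _ : Fin j => True) (by simp) (by simp), symDens, symCount,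
    div_eq_zero_iff, Nat.cast_eq_zero, Nat.card_eq_zero]
  refine .inl (.inl ⟨fun ⟨M, ⟨hM, hMI⟩, hd⟩ => hd ?_⟩)
  obtain ⟨A, -, hAM⟩ := exists_symm_map_eq (fun a => (p : ZMod (p ^ μ)) * a) M hM
    fun i k => (Ideal.mem_span_singleton.1 (hMI i k trivial)).imp fun _ => Eq.symm
  have hA : M = (p : ZMod (p ^ μ)) • A := hAM.symm
  have h0 : (p : ZMod (p ^ μ)) ^ μ = 0 := by rw [← Nat.cast_pow, ZMod.natCast_self]
  rw [hA, det_smul, Fintype.card_fin, pow_eq_zero_of_le h h0, zero_mul]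

/-- The generating function in `x` of the densities `blockDens` over `ZMod (p ^ μ)`, `1 ≤ μ`. -/
noncomputable def blockSeries (p : ℕ) (x : ℝ) (j m : ℕ) : ℝ :=
  ∑' μ : ℕ, blockDens (primeIdeal p (μ + 1)) j m * x ^ (μ + 1)

theorem summable_blockSeries (hp : p.Prime) {x : ℝ} (hx : |x| < 1) (j m : ℕ) :
    Summable fun μ : ℕ => blockDens (primeIdeal p (μ + 1)) j m * x ^ (μ + 1) := by
  have hs : Summable fun μ : ℕ => |x| ^ (μ + 1) :=
    (summable_nat_add_iff 1).2 (summable_geometric_of_lt_one (abs_nonneg x) hx)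
  refine Summable.of_norm_bounded hs fun μ => ?_
  have : NeZero (p ^ (μ + 1)) := ⟨(pow_pos hp.pos _).ne'⟩
  have h0 : 0 ≤ blockDens (primeIdeal p (μ + 1)) j m := symDens_nonneg _ _
  have h1 : blockDens (primeIdeal p (μ + 1)) j m ≤ 1 := symDens_le_one _ _
  rw [norm_mul, Real.norm_of_nonneg h0, norm_pow, Real.norm_eq_abs]
  exact mul_le_of_le_one_left (by positivity) h1

theorem blockSeries_zero_left (hp : p.Prime) (x : ℝ) (n : ℕ) :
    blockSeries p x 0 n = ∑' μ : ℕ, Psym n (p ^ (μ + 1)) * x ^ (μ + 1) := by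
  refine tsum_congr fun μ => ?_
  have : NeZero (p ^ (μ + 1)) := ⟨(pow_pos hp.pos _).ne'⟩
  rw [Psym_eq_blockDens n (primeIdeal p (μ + 1))]

theorem blockSeries_zero_right (hp : p.Prime) {x : ℝ} (hx : |x| < 1) (j : ℕ) :
    blockSeries p x j 0 = x ^ j * blockSeries p x 0 j := by
  rw [blockSeries_zero_left hp, blockSeries,
    ← (summable_blockSeries hp hx j 0).sum_add_tsum_nat_add j, ← tsum_mul_left,
    Finset.sum_eq_zero fun μ hμ => ?_, zero_add]
  · refine tsum_congr fun μ => ?_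
    rw [← blockDens_zero_right hp, show μ + j + 1 = μ + 1 + j by ring, pow_add x (μ + 1)]
    ring
  · rw [blockDens_zero_right_eq_zero p (Finset.mem_range.1 hμ), zero_mul]

theorem blockSeries_succ (hp : p.Prime) {x : ℝ} (hx : |x| < 1) (j m : ℕ) :
    blockSeries p x j (m + 1) = (1 - 1 / p) * blockSeries p x j m +
      1 / p * (1 - (1 / p) ^ m) * blockSeries p x j (m - 1) +
      (1 / p) ^ (m + 1) * blockSeries p x (j + 1) m := by
  have hs := summable_blockSeries hp hx
  simp only [blockSeries, ← tsum_mul_left]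
  rw [← ((hs j m).mul_left _).tsum_add ((hs j (m - 1)).mul_left _),
    ← (((hs j m).mul_left _).add ((hs j (m - 1)).mul_left _)).tsum_add
      ((hs (j + 1) m).mul_left _)]
  refine tsum_congr fun μ => ?_
  have : NeZero (p ^ (μ + 1)) := ⟨(pow_pos hp.pos _).ne'⟩
  have hp0 : (p : ℝ) ≠ 0 := Nat.cast_ne_zero.2 hp.ne_zero
  have hq : (1 / p : ℝ) * Nat.card (ZMod (p ^ (μ + 1))) = Nat.card (primeIdeal p (μ + 1)) := by
    rw [← card_primeIdeal_mul hp μ.succ_ne_zero, Nat.cast_mul]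
    field_simp
  rw [blockDens_succ _ (mem_primeIdeal_iff hp μ.succ_ne_zero) hq]
  ring

theorem blockSeries_eq_sum (hp : p.Prime) {x : ℝ} (hx : |x| < 1) (m : ℕ) : ∀ j : ℕ,
    blockSeries p x j m = ∑ r ∈ Finset.range (m + 1),
      corankProb (1 / p) m r * (x ^ (j + r) * blockSeries p x 0 (j + r)) := by
  have h1 : (1 : ℝ) < p := Nat.one_lt_cast.2 hp.one_lt
  have hq0 : (0 : ℝ) < 1 / p := by positivity
  have hq1 : (1 / p : ℝ) < 1 := (div_lt_one (by positivity)).2 h1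
  induction m using Nat.strong_induction_on with
  | _ m ih =>
  intro j
  obtain _ | m := m
  · simp [blockSeries_zero_right hp hx, corankProb_zero_right, oddProd]
  · rw [blockSeries_succ hp hx, ih m (by omega), ih (m - 1) (by omega), ih m (by omega),
      sum_range_corankProb_mul _ _ (show m + 1 ≤ m + 2 by omega),
      sum_range_corankProb_mul _ _ (show m - 1 + 1 ≤ m + 2 by omega),
      Finset.sum_range_succ' _ (m + 1), Finset.sum_range_succ' _ (m + 1),
      Finset.sum_range_succ' _ (m + 1), corankProb_succ_zero]
    simp only [corankProb_succ_succ hq0 hq1, add_mul, Finset.sum_add_distrib, mul_assoc,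
      ← Finset.mul_sum, mul_add]
    simp only [show ∀ r, j + 1 + r = j + (r + 1) by intro r; ring]
    ring

end PrimePower

theorem Psym_generating_function_even (p : ℕ) (hp : p.Prime) (q : ℝ)
    (hq : q = 1 / p) (k : ℕ) (x : ℝ) (hx : |x| < 1) :
    ∑' μ : ℕ, Psym (2 * k) (p ^ (μ + 1)) * x ^ (μ + 1) =
      ((1 - q ^ (2 * k + 1) * x) / (1 - q ^ (2 * k + 1))) *
        ∑' μ : ℕ, Psym (2 * k + 1) (p ^ (μ + 1)) * x ^ (μ + 1) := by
  have h1 : (1 : ℝ) < p := Nat.one_lt_cast.2 hp.one_lt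
  have hq0 : 0 < q := by rw [hq]; positivity
  have hq1 : q < 1 := by rw [hq]; exact (div_lt_one (by positivity)).2 h1
  have hF := eq_closedForm_of_eq_sum hq0 hq1 hx (blockSeries p x 0) fun m => by
    simpa [hq] using blockSeries_eq_sum hp hx m 0
  have hne : 1 - q ^ (2 * k + 1) ≠ 0 := (sub_pos.2 (pow_lt_one₀ hq0.le hq1 (by omega))).ne'
  rw [← blockSeries_zero_left hp, ← blockSeries_zero_left hp, hF (2 * k), hF (2 * k + 1),
    closedForm_two_mul, closedForm_two_mul_add_one]
  field_simp
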